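/- Let λ be a gl(m|n)-weight. If (λ̃+ρ_{m+1|n}, δ_0−δ_i) ∉ ℤ_{>0} for 1 ≤ i ≤ m and (λ̃+ρ_{m+1|n}, δ_0−δ_i) ∉ ℤ_{≥0} for 1̄ ≤ i ≤ n̄, then the U(gl(m+1|n))-module F_a ⊗ L(λ) is simple, and hence F_a ⊗ L(λ) ≅ L(λ̃). -/

import Mathlib

set_option maxHeartbeats 1000000
set_option synthInstance.maxHeartbeats 400000

noncomputable section
open scoped TensorProduct

/-- The index set `I = {1,…,m,1̄,…,n̄}` of `gl(m|n)`; `Sum.inl` are the even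
(unbarred) indices, `Sum.inr` the odd (barred) ones.  The index set
`Î = {0} ∪ I` of `gl(m+1|n)` is realized as `Ind (m+1) n`, with `0 = Sum.inl 0`. -/
abbrev Ind (m n : ℕ) := Fin m ⊕ Fin n

/-- Parity of an index, as `0` or `1`. -/
def pI {m n : ℕ} : Ind m n → ℕ := Sum.elim (fun _ => 0) (fun _ => 1)

/-- The total order `1 < ⋯ < m < 1̄ < ⋯ < n̄` on `I` (and, with `m+1` in place of `m`,
the order `0 < 1 < ⋯ < m < 1̄ < ⋯ < n̄` on `Î`). -/
def iltI {m n : ℕ} : Ind m n → Ind m n → Prop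
  | Sum.inl a, Sum.inl b => a < b
  | Sum.inl _, Sum.inr _ => True
  | Sum.inr _, Sum.inl _ => False
  | Sum.inr a, Sum.inr b => a < b

/-- The distinguished index `0` of `Î`. -/
def z0 {m n : ℕ} : Ind (m+1) n := Sum.inl 0

/-- The inclusion `I ↪ Î`. -/
def emb {m n : ℕ} : Ind m n → Ind (m+1) n := Sum.map Fin.succ id

lemma emb_injective {m n : ℕ} : Function.Injective (emb (m := m) (n := n)) := by
  intro a b h
  cases a <;> cases b <;> simp [emb, Fin.succ_inj] at h <;> simp [h]

lemma emb_ne_z0 {m n : ℕ} (a : Ind m n) : emb a ≠ z0 := by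
  cases a <;> simp [emb, z0, Fin.succ_ne_zero]

/-- Builds a linear map out of a space with basis `α` from a function on basis vectors. -/
def mkOp {α M : Type} [AddCommGroup M] [Module ℂ M] (g : α → M) : (α →₀ ℂ) →ₗ[ℂ] M :=
  Finsupp.lsum ℂ fun x => LinearMap.toSpanSingleton ℂ M (g x)

/-- Number of odd variables occurring before position `i`. -/
def cntB {n : ℕ} (b : Fin n → Bool) (i : Fin n) : ℕ :=
  (Finset.univ.filter fun j => j < i ∧ b j = true).card

/-- Number of odd variables occurring. -/
def cntA {n : ℕ} (b : Fin n → Bool) : ℕ := (Finset.univ.filter fun j => b j = true).card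


/-- The defining (super-)commutation relations of `gl`:
`e_ij e_kl − (−1)^{(|i|+|j|)(|k|+|l|)} e_kl e_ij = δ_jk e_il − (−1)^{(|i|+|j|)(|k|+|l|)} δ_li e_kj`. -/
inductive glRel (ι : Type) (p : ι → ℕ) [DecidableEq ι] :
    FreeAlgebra ℂ (ι × ι) → FreeAlgebra ℂ (ι × ι) → Prop
  | basic (i j k l : ι) : glRel ι p
      (FreeAlgebra.ι ℂ (i, j) * FreeAlgebra.ι ℂ (k, l)
        - ((-1 : ℂ) ^ ((p i + p j) * (p k + p l))) •
            (FreeAlgebra.ι ℂ (k, l) * FreeAlgebra.ι ℂ (i, j)))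
      ((if j = k then FreeAlgebra.ι ℂ (i, l) else 0)
        - ((-1 : ℂ) ^ ((p i + p j) * (p k + p l))) •
            (if l = i then FreeAlgebra.ι ℂ (k, j) else 0))

/-- The universal enveloping superalgebra of the general linear Lie superalgebra with
index set `ι` and parity `p`, presented by generators `e_ij` and the super-commutator
relations. -/
abbrev UEA (ι : Type) (p : ι → ℕ) [DecidableEq ι] : Type := RingQuot (glRel ι p)

/-- The generator `e_ij` of `UEA ι p`. -/
def gen {ι : Type} (p : ι → ℕ) [DecidableEq ι] (i j : ι) : UEA ι p :=
  RingQuot.mkAlgHom ℂ (glRel ι p) (FreeAlgebra.ι ℂ (i, j))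

/-- Monomials of the `D'(m|n)`-module `F_a`: such a monomial
`t_0^{a−k_1−⋯−k_{n̄}} t_1^{k_1}⋯t_m^{k_m} t_{1̄}^{k_{1̄}}⋯t_{n̄}^{k_{n̄}}` is determined by the
exponents `(k_1,…,k_m,k_{1̄},…,k_{n̄})`. -/
abbrev FaMon (m n : ℕ) := (Fin m → ℕ) × (Fin n → Bool)

/-- The module `F_a`, as the vector space with basis its monomials. -/
abbrev FaSp (m n : ℕ) : Type := FaMon m n →₀ ℂ

/-- A basis monomial of `F_a`. -/
def amono {m n : ℕ} (x : FaMon m n) : FaSp m n := Finsupp.single x 1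

/-- The parity of a monomial of `F_a`. -/
def parM {m n : ℕ} (x : FaMon m n) : ℕ := cntA x.2

/-- The monomial `t_0^a` of `F_a`. -/
def hwMon (m n : ℕ) : FaMon m n := (fun _ => 0, fun _ => false)

/-- Multiplication by `t_i/t_0` on `F_a`, even `i`. -/
def aDivE {m n : ℕ} (i : Fin m) : Module.End ℂ (FaSp m n) :=
  mkOp fun x => amono (Function.update x.1 i (x.1 i + 1), x.2)

/-- Multiplication by `t_ī/t_0` on `F_a`, odd `ī`. -/
def aDivO {m n : ℕ} (i : Fin n) : Module.End ℂ (FaSp m n) :=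
  mkOp fun x => if x.2 i then 0 else
    ((-1 : ℂ) ^ (cntB x.2 i)) • amono (x.1, Function.update x.2 i true)

/-- The operator `t_0∂_0` on `F_a` (the exponent of `t_0` is `a` minus the total degree of the
other variables). -/
def aPar0 {m n : ℕ} (a : ℂ) : Module.End ℂ (FaSp m n) :=
  mkOp fun x => (a - (∑ i, (x.1 i : ℂ)) - (cntA x.2 : ℂ)) • amono x

/-- The operator `t_0∂_i` on `F_a`, even `i`. -/
def aParE {m n : ℕ} (i : Fin m) : Module.End ℂ (FaSp m n) :=
  mkOp fun x => (x.1 i : ℂ) • amono (Function.update x.1 i (x.1 i - 1), x.2)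

/-- The operator `t_0∂_ī` on `F_a`, odd `ī`. -/
def aParO {m n : ℕ} (i : Fin n) : Module.End ℂ (FaSp m n) :=
  mkOp fun x => if x.2 i then
    ((-1 : ℂ) ^ (cntB x.2 i)) • amono (x.1, Function.update x.2 i false) else 0

/-- `t_i/t_0` on `F_a` for `i ∈ I`. -/
def aDiv {m n : ℕ} : Ind m n → Module.End ℂ (FaSp m n) := Sum.elim aDivE aDivO

/-- `t_0∂_i` on `F_a` for `i ∈ Î`. -/
def aParB {m n : ℕ} (a : ℂ) : Ind (m+1) n → Module.End ℂ (FaSp m n) :=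
  Sum.elim (Fin.cases (aPar0 a) aParE) aParO

/-- `t_i/t_0` on `F_a` for `i ∈ Î`. -/
def aDivB {m n : ℕ} : Ind (m+1) n → Module.End ℂ (FaSp m n) :=
  Sum.elim (Fin.cases 1 aDivE) aDivO

/-- The operator `t_i∂_j` on `F_a`, `i, j ∈ Î`. -/
def aTD {m n : ℕ} (a : ℂ) (i j : Ind (m+1) n) : Module.End ℂ (FaSp m n) :=
  aDivB i * aParB a j

/-- The simple highest weight module `L(λ)` over `U(gl(m|n))`: a simple module with a
(nonzero) highest weight vector of weight `λ`. -/
structure SimpleHW (m n : ℕ) (lam : Ind m n → ℂ) where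
  L : Type
  [acg : AddCommGroup L]
  [mod : Module ℂ L]
  ρ : UEA (Ind m n) pI →ₐ[ℂ] Module.End ℂ L
  v : L
  v_ne : v ≠ 0
  hw : ∀ i j : Ind m n, iltI i j → ρ (gen pI i j) v = 0
  hwt : ∀ i : Ind m n, ρ (gen pI i i) v = lam i • v
  simple : ∀ N : Submodule ℂ L, (∀ u x, x ∈ N → ρ u x ∈ N) → N = ⊥ ∨ N = ⊤

attribute [instance] SimpleHW.acg SimpleHW.mod

/-- The Verma module `M(λ)` over `U(gl(m|n))`: a module generated by a highest weight vector
of weight `λ` which is universal among such. -/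
structure VermaM (m n : ℕ) (lam : Ind m n → ℂ) where
  L : Type
  [acg : AddCommGroup L]
  [mod : Module ℂ L]
  ρ : UEA (Ind m n) pI →ₐ[ℂ] Module.End ℂ L
  v : L
  v_ne : v ≠ 0
  hw : ∀ i j : Ind m n, iltI i j → ρ (gen pI i j) v = 0
  hwt : ∀ i : Ind m n, ρ (gen pI i i) v = lam i • v
  gens : ∀ N : Submodule ℂ L, (∀ u x, x ∈ N → ρ u x ∈ N) → v ∈ N → N = ⊤
  univ : ∀ (W : Type) [AddCommGroup W] [Module ℂ W]
      (ρW : UEA (Ind m n) pI →ₐ[ℂ] Module.End ℂ W) (w : W),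
      (∀ i j : Ind m n, iltI i j → ρW (gen pI i j) w = 0) →
      (∀ i : Ind m n, ρW (gen pI i i) w = lam i • w) →
      ∃ g : L →ₗ[ℂ] W, g v = w ∧ ∀ u x, g (ρ u x) = ρW u (g x)

attribute [instance] VermaM.acg VermaM.mod

/-- The predicate expressing that `Θ` is the representation of `U(gl(m+1|n))` on
`F_a ⊗ L` obtained via `φ_R` from a representation `ρ` of `U(gl(m|n))` on `L`, where the
central element `R` acts by the scalar `r`; the formulas for the action of the generators on
pure tensors (with the appropriate Koszul signs) are written out explicitly. -/
def IsTensorRep {m n : ℕ} (a r : ℂ) {L : Type} [AddCommGroup L] [Module ℂ L]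
    (ρ : UEA (Ind m n) pI →ₐ[ℂ] Module.End ℂ L)
    (Θ : UEA (Ind (m+1) n) pI →ₐ[ℂ] Module.End ℂ (FaSp m n ⊗[ℂ] L)) : Prop :=
  (∀ (c d : Ind m n) (x : FaMon m n) (v : L),
    Θ (gen pI (emb c) (emb d)) (amono x ⊗ₜ[ℂ] v) =
      (aTD a (emb c) (emb d)) (amono x) ⊗ₜ[ℂ] v
      + ((-1 : ℂ) ^ ((pI c + pI d) * parM x)) • (amono x ⊗ₜ[ℂ] (ρ (gen pI c d) v))
      + (if c = d then (((-1 : ℂ) ^ (pI c * pI d)) * r) • (amono x ⊗ₜ[ℂ] v) else 0)) ∧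
  (∀ (c : Ind m n) (x : FaMon m n) (v : L),
    Θ (gen pI (emb c) z0) (amono x ⊗ₜ[ℂ] v) =
      (aTD a (emb c) z0) (amono x) ⊗ₜ[ℂ] v
      - ∑ j : Ind m n, (((-1 : ℂ) ^ (pI c * pI j)) * ((-1 : ℂ) ^ ((pI c + pI j) * parM x))) •
          ((aDiv j (amono x)) ⊗ₜ[ℂ] (ρ (gen pI c j) v))) ∧
  (∀ (d : Ind m n) (x : FaMon m n) (v : L),
    Θ (gen pI z0 (emb d)) (amono x ⊗ₜ[ℂ] v) = (aTD a z0 (emb d)) (amono x) ⊗ₜ[ℂ] v) ∧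
  (∀ (x : FaMon m n) (v : L),
    Θ (gen pI z0 z0) (amono x ⊗ₜ[ℂ] v) =
      (aTD a z0 z0) (amono x) ⊗ₜ[ℂ] v + r • (amono x ⊗ₜ[ℂ] v))

/-- The shifted weight `λ̃ = (a+r, λ_1+r, …, λ_m+r, λ_{1̄}−r, …, λ_{n̄}−r)`. -/
def lamTilde {m n : ℕ} (a r : ℂ) (lam : Ind m n → ℂ) : Ind (m+1) n → ℂ :=
  Sum.elim (Fin.cases (a + r) fun k => lam (Sum.inl k) + r) fun k => lam (Sum.inr k) - r

/-- The Weyl vector `ρ_{m|n} = (m, m−1, …, 1, −1, −2, …, −n)`. -/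
def rhoS {m n : ℕ} : Ind m n → ℂ := Sum.elim (fun k => (m : ℂ) - k) fun k => -(k : ℂ) - 1

/-- Antidominance of a weight of `gl(m|n)`:
`⟨λ+ρ, α^∨⟩ ∉ ℤ_{>0}` for all positive even roots `α`. -/
def Antidom {m n : ℕ} (lam : Ind m n → ℂ) : Prop :=
  (∀ i j : Fin m, i < j → ¬∃ N : ℕ,
    (lam (Sum.inl i) + rhoS (m:=m) (n:=n) (Sum.inl i)) - (lam (Sum.inl j) + rhoS (m:=m) (n:=n) (Sum.inl j)) = (N : ℂ) + 1) ∧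
  (∀ i j : Fin n, i < j → ¬∃ N : ℕ,
    (lam (Sum.inr i) + rhoS (m:=m) (n:=n) (Sum.inr i)) - (lam (Sum.inr j) + rhoS (m:=m) (n:=n) (Sum.inr j)) = (N : ℂ) + 1)

/-- Typicality of a weight of `gl(m|n)`:
`(λ+ρ, α) ≠ 0` for all positive odd isotropic roots `α = δ_i − ε_j`. -/
def Typical {m n : ℕ} (lam : Ind m n → ℂ) : Prop :=
  ∀ (i : Fin m) (j : Fin n),
    (lam (Sum.inl i) + rhoS (m:=m) (n:=n) (Sum.inl i)) + (lam (Sum.inr j) + rhoS (m:=m) (n:=n) (Sum.inr j)) ≠ 0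


/-! ### Generic representation lemmas -/

lemma aux_rel {ι : Type} {p : ι → ℕ} [DecidableEq ι] {M : Type} [AddCommGroup M] [Module ℂ M]
    (ρ : UEA ι p →ₐ[ℂ] Module.End ℂ M) (i j k l : ι) (x : M) :
    ρ (gen p i j) (ρ (gen p k l) x)
      = ((-1 : ℂ) ^ ((p i + p j) * (p k + p l))) • ρ (gen p k l) (ρ (gen p i j) x)
        + ((if j = k then ρ (gen p i l) x else 0)
        - ((-1 : ℂ) ^ ((p i + p j) * (p k + p l))) • (if l = i then ρ (gen p k j) x else 0)) := by
  have h := RingQuot.mkAlgHom_rel ℂ (glRel.basic (p := p) i j k l)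
  have h2 := congrArg (fun u => ρ u x) h
  have e : ∀ s t : ι, RingQuot.mkAlgHom ℂ (glRel ι p) (FreeAlgebra.ι ℂ (s, t)) = gen p s t :=
    fun _ _ => rfl
  have h3 : ρ (gen p i j) (ρ (gen p k l) x)
      - ((-1 : ℂ) ^ ((p i + p j) * (p k + p l))) • ρ (gen p k l) (ρ (gen p i j) x)
      = ((if j = k then ρ (gen p i l) x else 0)
        - ((-1 : ℂ) ^ ((p i + p j) * (p k + p l))) • (if l = i then ρ (gen p k j) x else 0)) := by
    simp only [map_sub, map_smul, map_mul, e] at h2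
    simp only [LinearMap.sub_apply, LinearMap.smul_apply, Module.End.mul_apply] at h2
    rw [h2]
    split_ifs <;> simp [e]
  rw [← h3]; abel

lemma aux_stable {ι : Type} {p : ι → ℕ} [DecidableEq ι] {M : Type} [AddCommGroup M] [Module ℂ M]
    (ρ : UEA ι p →ₐ[ℂ] Module.End ℂ M) (N : Submodule ℂ M)
    (h : ∀ i j, ∀ x ∈ N, ρ (gen p i j) x ∈ N) : ∀ u, ∀ x ∈ N, ρ u x ∈ N := by
  intro u
  obtain ⟨w, rfl⟩ := RingQuot.mkAlgHom_surjective ℂ (glRel ι p) u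
  induction w using FreeAlgebra.induction with
  | grade0 r =>
    intro x hx
    rw [AlgHom.commutes, AlgHom.commutes]
    exact N.smul_mem r hx
  | grade1 q => exact fun x hx => h q.1 q.2 x hx
  | mul a b ha hb =>
    intro x hx
    rw [map_mul, map_mul]
    exact ha _ (hb _ hx)
  | add a b ha hb =>
    intro x hx
    rw [map_add, map_add]
    exact N.add_mem (ha _ hx) (hb _ hx)

/-- rank of an index -/
def rkI {m n : ℕ} : Ind m n → ℕ := Sum.elim (fun i => (i : ℕ)) (fun j => m + j)

lemma iltI_iff {m n : ℕ} (i j : Ind m n) : iltI i j ↔ rkI i < rkI j := by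
  rcases i with i | i <;> rcases j with j | j <;> simp [iltI, rkI] <;> omega

lemma rkI_inj {m n : ℕ} {i j : Ind m n} (h : rkI i = rkI j) : i = j := by
  rcases i with i | i <;> rcases j with j | j <;> simp [rkI] at h <;>
    first | (congr 1; ext; omega) | (exfalso; omega)

/-- the grading operator -/
def hOp {m n : ℕ} {M : Type} [AddCommGroup M] [Module ℂ M]
    (ρ : UEA (Ind m n) pI →ₐ[ℂ] Module.End ℂ M) : Module.End ℂ M :=
  ∑ i, (rkI i : ℂ) • ρ (gen pI i i)

lemma hOp_comm {m n : ℕ} {M : Type} [AddCommGroup M] [Module ℂ M]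
    (ρ : UEA (Ind m n) pI →ₐ[ℂ] Module.End ℂ M) (k l : Ind m n) (x : M) :
    hOp ρ (ρ (gen pI k l) x)
      = ρ (gen pI k l) (hOp ρ x) + ((rkI k : ℂ) - rkI l) • ρ (gen pI k l) x := by
  simp only [hOp, LinearMap.sum_apply, LinearMap.smul_apply, map_sum, map_smul]
  have hs : ∀ i : Ind m n, ((-1 : ℂ) ^ ((pI i + pI i) * (pI k + pI l))) = 1 := by
    intro i; rw [← two_mul, mul_assoc, pow_mul]; simp
  have : ∀ i : Ind m n, (rkI i : ℂ) • ρ (gen pI i i) (ρ (gen pI k l) x)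
      = (rkI i : ℂ) • ρ (gen pI k l) (ρ (gen pI i i) x)
        + ((if i = k then (rkI k : ℂ) • ρ (gen pI k l) x else 0)
        - (if l = i then (rkI l : ℂ) • ρ (gen pI k l) x else 0)) := by
    intro i
    rw [aux_rel, hs]
    simp only [one_smul, smul_add, smul_sub]
    congr 2
    · split_ifs with h
      · rw [h]
      · simp
    · split_ifs with h
      · rw [h]
      · simp
  rw [Finset.sum_congr rfl fun i _ => this i, Finset.sum_add_distrib, Finset.sum_sub_distrib]
  simp [sub_smul]

/-- the submodule generated by a vector under lowering operators -/
def lowS {m n : ℕ} {M : Type} [AddCommGroup M] [Module ℂ M]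
    (ρ : UEA (Ind m n) pI →ₐ[ℂ] Module.End ℂ M) (v : M) : Submodule ℂ M :=
  sInf {N | v ∈ N ∧ ∀ i j, iltI j i → ∀ x ∈ N, ρ (gen pI i j) x ∈ N}

lemma lowS_le {m n : ℕ} {M : Type} [AddCommGroup M] [Module ℂ M]
    (ρ : UEA (Ind m n) pI →ₐ[ℂ] Module.End ℂ M) (v : M) (N : Submodule ℂ M)
    (h : v ∈ N ∧ ∀ i j, iltI j i → ∀ x ∈ N, ρ (gen pI i j) x ∈ N) : lowS ρ v ≤ N :=
  sInf_le h

lemma lowS_mem {m n : ℕ} {M : Type} [AddCommGroup M] [Module ℂ M]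
    (ρ : UEA (Ind m n) pI →ₐ[ℂ] Module.End ℂ M) (v : M) : v ∈ lowS ρ v := by
  rw [lowS, Submodule.mem_sInf]; exact fun N h => h.1

lemma lowS_low {m n : ℕ} {M : Type} [AddCommGroup M] [Module ℂ M]
    (ρ : UEA (Ind m n) pI →ₐ[ℂ] Module.End ℂ M) (v : M) (i j : Ind m n) (hij : iltI j i)
    (x : M) (hx : x ∈ lowS ρ v) : ρ (gen pI i j) x ∈ lowS ρ v := by
  rw [lowS, Submodule.mem_sInf] at *
  exact fun N h => h.2 i j hij x (hx N h)

lemma lowS_stable {m n : ℕ} {M : Type} [AddCommGroup M] [Module ℂ M]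
    (ρ : UEA (Ind m n) pI →ₐ[ℂ] Module.End ℂ M) (v : M) (lam : Ind m n → ℂ)
    (hw : ∀ i j : Ind m n, iltI i j → ρ (gen pI i j) v = 0)
    (hwt : ∀ i : Ind m n, ρ (gen pI i i) v = lam i • v) :
    ∀ u, ∀ x ∈ lowS ρ v, ρ u x ∈ lowS ρ v := by
  apply aux_stable
  let T : Submodule ℂ M := lowS ρ v ⊓ ⨅ q : Ind m n × Ind m n, (lowS ρ v).comap (ρ (gen pI q.1 q.2))
  have hT : ∀ x, x ∈ T ↔ x ∈ lowS ρ v ∧ ∀ i j, ρ (gen pI i j) x ∈ lowS ρ v := by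
    intro x
    simp [T, Submodule.mem_iInf]
  have hle : lowS ρ v ≤ T := by
    apply lowS_le
    refine ⟨(hT v).2 ⟨lowS_mem ρ v, ?_⟩, ?_⟩
    · intro i j
      rcases lt_trichotomy (rkI i) (rkI j) with h | h | h
      · rw [hw i j ((iltI_iff i j).2 h)]; exact zero_mem _
      · rw [rkI_inj h, hwt]; exact Submodule.smul_mem _ _ (lowS_mem ρ v)
      · exact lowS_low ρ v i j ((iltI_iff j i).2 h) v (lowS_mem ρ v)
    · intro k l hkl x hx
      obtain ⟨hx1, hx2⟩ := (hT x).1 hx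
      refine (hT _).2 ⟨hx2 k l, ?_⟩
      intro i j
      rw [aux_rel]
      refine add_mem (Submodule.smul_mem _ _ (lowS_low ρ v k l hkl _ (hx2 i j)))
        (sub_mem ?_ (Submodule.smul_mem _ _ ?_))
      · split_ifs
        · exact hx2 _ _
        · exact zero_mem _
      · split_ifs
        · exact hx2 _ _
        · exact zero_mem _
  exact fun i j x hx => ((hT x).1 (hle hx)).2 i j

lemma hOp_hw {m n : ℕ} {M : Type} [AddCommGroup M] [Module ℂ M]
    (ρ : UEA (Ind m n) pI →ₐ[ℂ] Module.End ℂ M) (v : M) (lam : Ind m n → ℂ)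
    (hwt : ∀ i : Ind m n, ρ (gen pI i i) v = lam i • v) :
    hOp ρ v = (∑ i, (rkI i : ℂ) * lam i) • v := by
  simp only [hOp, LinearMap.sum_apply, LinearMap.smul_apply, hwt, Finset.sum_smul, mul_smul]

lemma lowS_top_weight {m n : ℕ} {M : Type} [AddCommGroup M] [Module ℂ M]
    (ρ : UEA (Ind m n) pI →ₐ[ℂ] Module.End ℂ M) (v : M) (lam : Ind m n → ℂ)
    (hwt : ∀ i : Ind m n, ρ (gen pI i i) v = lam i • v)
    (y : M) (hy : y ∈ lowS ρ v) (hyw : ∀ i : Ind m n, ρ (gen pI i i) y = lam i • y) :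
    ∃ c : ℂ, y = c • v := by
  set h : ℂ := ∑ i, (rkI i : ℂ) * lam i with hh
  let W : Submodule ℂ M := ⨆ q : ℕ, (hOp ρ).eigenspace (h + (q : ℂ) + 1)
  have key : ∀ i j, iltI j i → ∀ μ : ℂ, ∀ x ∈ (hOp ρ).eigenspace μ,
      ρ (gen pI i j) x ∈ (hOp ρ).eigenspace (μ + ((rkI i : ℂ) - rkI j)) := by
    intro i j _ μ x hx
    rw [Module.End.mem_eigenspace_iff] at *
    rw [hOp_comm, hx, map_smul, add_smul]
  have hv : v ∈ (hOp ρ).eigenspace h := by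
    rw [Module.End.mem_eigenspace_iff]; exact hOp_hw ρ v lam hwt
  have hsh : ∀ i j : Ind m n, iltI j i → ∃ s : ℕ, ((rkI i : ℂ) - rkI j) = s + 1 := by
    intro i j hij
    have := (iltI_iff j i).1 hij
    refine ⟨rkI i - rkI j - 1, ?_⟩
    have e : rkI i = (rkI i - rkI j - 1) + 1 + rkI j := by omega
    have e2 : (rkI i : ℂ) = ((rkI i - rkI j - 1 : ℕ) : ℂ) + 1 + rkI j := by exact_mod_cast e
    rw [e2]; ring
  have hle : lowS ρ v ≤ (Submodule.span ℂ {v}) ⊔ W := by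
    apply lowS_le
    refine ⟨(le_sup_left : _ ≤ (Submodule.span ℂ {v}) ⊔ W) (Submodule.mem_span_singleton_self v), ?_⟩
    intro i j hij x hx
    obtain ⟨s, hs⟩ := hsh i j hij
    have : (Submodule.span ℂ {v}) ⊔ W ≤ W.comap (ρ (gen pI i j)) := by
      apply sup_le
      · rw [Submodule.span_le, Set.singleton_subset_iff]
        have := key i j hij h v hv
        rw [hs, ← add_assoc] at this
        exact (le_iSup (fun q : ℕ => (hOp ρ).eigenspace (h + (q : ℂ) + 1)) s) this
      · apply iSup_le
        intro q z hz
        have := key i j hij _ z hz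
        rw [hs] at this
        have e : h + (q : ℂ) + 1 + ((s : ℂ) + 1) = h + ((q + s + 1 : ℕ) : ℂ) + 1 := by
          push_cast; ring
        rw [e] at this
        exact (le_iSup (fun q : ℕ => (hOp ρ).eigenspace (h + (q : ℂ) + 1)) (q + s + 1)) this
    exact (le_sup_right : W ≤ _) (this hx)
  obtain ⟨a, ha, w, hw, hsum⟩ := Submodule.mem_sup.1 (hle hy)
  obtain ⟨c, rfl⟩ := Submodule.mem_span_singleton.1 ha
  refine ⟨c, ?_⟩
  have hy' : y ∈ (hOp ρ).eigenspace h := by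
    rw [Module.End.mem_eigenspace_iff]; exact hOp_hw ρ y lam hyw
  have hw1 : w ∈ (hOp ρ).eigenspace h := by
    have : w = y - c • v := by rw [← hsum]; abel
    rw [this]; exact sub_mem hy' (Submodule.smul_mem _ _ hv)
  have hw2 : w ∈ ⨆ μ, ⨆ (_ : μ ≠ h), (hOp ρ).eigenspace μ := by
    refine (iSup_le fun q => ?_ : W ≤ _) hw
    refine le_iSup₂_of_le (h + (q : ℂ) + 1) ?_ le_rfl
    intro he
    have : ((q + 1 : ℕ) : ℂ) = 0 := by push_cast; linear_combination he
    exact Nat.succ_ne_zero q (Nat.cast_eq_zero.1 this)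
  have := (Module.End.eigenspaces_iSupIndep (hOp ρ)) h
  have h0 : w = 0 := by
    have := (Submodule.disjoint_def.1 this) w hw1 hw2
    exact this
  rw [← hsum, h0, add_zero]

lemma uniqHW {m n : ℕ} {lam : Ind m n → ℂ} (A B : SimpleHW m n lam) :
    ∃ g : A.L ≃ₗ[ℂ] B.L, ∀ u x, g (A.ρ u x) = B.ρ u (g x) := by
  let ρ : UEA (Ind m n) pI →ₐ[ℂ] Module.End ℂ (A.L × B.L) :=
    (LinearMap.prodMapAlgHom ℂ A.L B.L).comp (AlgHom.prod A.ρ B.ρ)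
  have hρ : ∀ u x, ρ u x = (A.ρ u x.1, B.ρ u x.2) := fun u x => rfl
  let v : A.L × B.L := (A.v, B.v)
  have hw : ∀ i j : Ind m n, iltI i j → ρ (gen pI i j) v = 0 := by
    intro i j h; rw [hρ]; simp [v, A.hw i j h, B.hw i j h]
  have hwt : ∀ i : Ind m n, ρ (gen pI i i) v = lam i • v := by
    intro i; rw [hρ]; simp [v, A.hwt, B.hwt]
  let S := lowS ρ v
  have hS : ∀ u, ∀ x ∈ S, ρ u x ∈ S := lowS_stable ρ v lam hw hwt
  have hvS : v ∈ S := lowS_mem ρ v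
  have nB : ∀ b, ((0 : A.L), b) ∈ S → b = 0 := by
    intro b hb
    rcases B.simple (S.comap (LinearMap.inr ℂ A.L B.L)) (fun u x hx => by
      have := hS u _ hx
      rw [hρ] at this
      simpa using this) with h | h
    · have : b ∈ S.comap (LinearMap.inr ℂ A.L B.L) := by simpa using hb
      rw [h] at this; simpa using this
    · exfalso
      have : B.v ∈ S.comap (LinearMap.inr ℂ A.L B.L) := by rw [h]; trivial
      obtain ⟨c, hc⟩ := lowS_top_weight ρ v lam hwt ((0 : A.L), B.v) (by simpa using this)
        (fun i => by rw [hρ]; simp [B.hwt])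
      have h1 : (0 : A.L) = c • A.v := congrArg Prod.fst hc
      have h2 : B.v = c • B.v := congrArg Prod.snd hc
      rcases smul_eq_zero.1 h1.symm with h | h
      · rw [h, zero_smul] at h2; exact B.v_ne h2
      · exact A.v_ne h
  have nA : ∀ b, (b, (0 : B.L)) ∈ S → b = 0 := by
    intro b hb
    rcases A.simple (S.comap (LinearMap.inl ℂ A.L B.L)) (fun u x hx => by
      have := hS u _ hx
      rw [hρ] at this
      simpa using this) with h | h
    · have : b ∈ S.comap (LinearMap.inl ℂ A.L B.L) := by simpa using hb
      rw [h] at this; simpa using this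
    · exfalso
      have : A.v ∈ S.comap (LinearMap.inl ℂ A.L B.L) := by rw [h]; trivial
      obtain ⟨c, hc⟩ := lowS_top_weight ρ v lam hwt (A.v, (0 : B.L)) (by simpa using this)
        (fun i => by rw [hρ]; simp [A.hwt])
      have h1 : (0 : B.L) = c • B.v := congrArg Prod.snd hc
      have h2 : A.v = c • A.v := congrArg Prod.fst hc
      rcases smul_eq_zero.1 h1.symm with h | h
      · rw [h, zero_smul] at h2; exact A.v_ne h2
      · exact B.v_ne h
  have sA : ∀ x : A.L, ∃ s ∈ S, s.1 = x := by
    rcases A.simple (S.map (LinearMap.fst ℂ A.L B.L)) (fun u x hx => by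
      obtain ⟨s, hs, rfl⟩ := hx
      exact ⟨_, hS u s hs, rfl⟩) with h | h
    · exfalso
      have : A.v ∈ S.map (LinearMap.fst ℂ A.L B.L) := ⟨v, hvS, rfl⟩
      rw [h] at this; exact A.v_ne (by simpa using this)
    · intro x
      have : x ∈ S.map (LinearMap.fst ℂ A.L B.L) := by rw [h]; trivial
      obtain ⟨s, hs, he⟩ := this
      exact ⟨s, hs, he⟩
  have sB : ∀ x : B.L, ∃ s ∈ S, s.2 = x := by
    rcases B.simple (S.map (LinearMap.snd ℂ A.L B.L)) (fun u x hx => by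
      obtain ⟨s, hs, rfl⟩ := hx
      exact ⟨_, hS u s hs, rfl⟩) with h | h
    · exfalso
      have : B.v ∈ S.map (LinearMap.snd ℂ A.L B.L) := ⟨v, hvS, rfl⟩
      rw [h] at this; exact B.v_ne (by simpa using this)
    · intro x
      have : x ∈ S.map (LinearMap.snd ℂ A.L B.L) := by rw [h]; trivial
      obtain ⟨s, hs, he⟩ := this
      exact ⟨s, hs, he⟩
  let f1 : S →ₗ[ℂ] A.L := (LinearMap.fst ℂ A.L B.L).comp S.subtype
  let f2 : S →ₗ[ℂ] B.L := (LinearMap.snd ℂ A.L B.L).comp S.subtype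
  have b1 : Function.Bijective f1 := by
    constructor
    · rw [injective_iff_map_eq_zero]
      rintro ⟨⟨p, q⟩, hs⟩ h
      have hp : p = 0 := h
      subst hp
      have := nB q hs
      subst this; rfl
    · intro x
      obtain ⟨s, hs, he⟩ := sA x
      exact ⟨⟨s, hs⟩, he⟩
  have b2 : Function.Bijective f2 := by
    constructor
    · rw [injective_iff_map_eq_zero]
      rintro ⟨⟨p, q⟩, hs⟩ h
      have hp : q = 0 := h
      subst hp
      have := nA p hs
      subst this; rfl
    · intro x
      obtain ⟨s, hs, he⟩ := sB x
      exact ⟨⟨s, hs⟩, he⟩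
  let e1 := LinearEquiv.ofBijective f1 b1
  let e2 := LinearEquiv.ofBijective f2 b2
  refine ⟨e1.symm.trans e2, ?_⟩
  intro u x
  obtain ⟨s, rfl⟩ := e1.surjective x
  have h1 : A.ρ u (e1 s) = e1 ⟨ρ u s, hS u s s.2⟩ := rfl
  rw [h1]
  simp only [LinearEquiv.trans_apply, LinearEquiv.symm_apply_apply]
  rfl

/-! ### The module `F_a` -/

lemma mkOp_amono {m n : ℕ} {M : Type} [AddCommGroup M] [Module ℂ M] (g : FaMon m n → M)
    (x : FaMon m n) : mkOp g (amono x) = g x := by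
  simp [mkOp, amono]

/-- increase the exponent of the variable `d` -/
def incM {m n : ℕ} : Ind m n → FaMon m n → FaMon m n
  | Sum.inl i, x => (Function.update x.1 i (x.1 i + 1), x.2)
  | Sum.inr j, x => (x.1, Function.update x.2 j true)

/-- coefficient of multiplication by `t_d/t_0` -/
def cfM {m n : ℕ} : Ind m n → FaMon m n → ℂ
  | Sum.inl _, _ => 1
  | Sum.inr j, x => if x.2 j then 0 else (-1 : ℂ) ^ (cntB x.2 j)

/-- coefficient of `t_0∂_d` -/
def qM {m n : ℕ} : Ind m n → FaMon m n → ℂ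
  | Sum.inl i, x => (x.1 i : ℂ) + 1
  | Sum.inr j, x => if x.2 j then 0 else 1

/-- degree -/
def degM {m n : ℕ} (x : FaMon m n) : ℕ := (∑ i, x.1 i) + cntA x.2

lemma cntB_update {n : ℕ} (b : Fin n → Bool) (j : Fin n) (c : Bool) :
    cntB (Function.update b j c) j = cntB b j := by
  unfold cntB
  congr 1
  ext k
  simp only [Finset.mem_filter, Finset.mem_univ, true_and]
  constructor <;> rintro ⟨h1, h2⟩ <;> refine ⟨h1, ?_⟩ <;>
    simpa [Function.update_of_ne h1.ne] using h2

lemma cntA_update {n : ℕ} (b : Fin n → Bool) (j : Fin n) (h : b j = false) :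
    cntA (Function.update b j true) = cntA b + 1 := by
  unfold cntA
  rw [← Finset.card_insert_of_notMem (a := j) (s := Finset.univ.filter fun k => b k = true)
    (by simp [h])]
  congr 1
  ext k
  by_cases hk : k = j
  · subst hk; simp
  · simp [hk]

lemma degM_inc {m n : ℕ} (d : Ind m n) (x : FaMon m n) (h : cfM d x ≠ 0) :
    degM (incM d x) = degM x + 1 := by
  rcases d with i | j
  · simp only [degM, incM]
    rw [Finset.sum_update_of_mem (Finset.mem_univ i),
      ← Finset.add_sum_erase _ _ (Finset.mem_univ i), Finset.sdiff_singleton_eq_erase]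
    omega
  · have hj : x.2 j = false := by
      by_contra hc; simp at hc; simp [cfM, hc] at h
    simp only [degM, incM, cntA_update _ _ hj]; omega

lemma parM_inc {m n : ℕ} (d : Ind m n) (x : FaMon m n) (h : cfM d x ≠ 0) :
    parM (incM d x) = parM x + pI d := by
  rcases d with i | j
  · simp [parM, incM, pI]
  · have hj : x.2 j = false := by
      by_contra hc; simp at hc; simp [cfM, hc] at h
    simp only [parM, incM, cntA_update _ _ hj, pI]; rfl

lemma exists_inc {m n : ℕ} (x : FaMon m n) (h : degM x ≠ 0) :
    ∃ d y, incM d y = x ∧ cfM d y ≠ 0 ∧ qM d y ≠ 0 := by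
  by_cases h1 : ∃ i, x.1 i ≠ 0
  · obtain ⟨i, hi⟩ := h1
    refine ⟨Sum.inl i, (Function.update x.1 i (x.1 i - 1), x.2), ?_, ?_, ?_⟩
    · have : x.1 i - 1 + 1 = x.1 i := by omega
      simp [incM, this]
    · simp [cfM]
    · simp only [qM]; exact Nat.cast_add_one_ne_zero _
  · push Not at h1
    by_cases h2 : ∃ j, x.2 j = true
    · obtain ⟨j, hj⟩ := h2
      refine ⟨Sum.inr j, (x.1, Function.update x.2 j false), ?_, ?_, ?_⟩
      · simp [incM, ← hj]
      · simp [cfM]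
      · simp [qM]
    · exfalso
      push Not at h2
      apply h
      simp [degM, h1, cntA, h2]

lemma degM_eq_zero {m n : ℕ} (x : FaMon m n) (h : degM x = 0) : x = hwMon m n := by
  simp only [degM, Nat.add_eq_zero_iff, Finset.sum_eq_zero_iff, cntA, Finset.card_eq_zero,
    Finset.filter_eq_empty_iff] at h
  refine Prod.ext (funext fun i => h.1 i (Finset.mem_univ i)) (funext fun j => ?_)
  simpa [hwMon] using h.2 (Finset.mem_univ j)

lemma aDiv_amono {m n : ℕ} (d : Ind m n) (x : FaMon m n) :
    aDiv d (amono x) = cfM d x • amono (incM d x) := by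
  rcases d with i | j
  · simp [aDiv, aDivE, mkOp_amono, cfM, incM]
  · simp only [aDiv, aDivO, Sum.elim_inr, mkOp_amono, cfM, incM]
    split_ifs <;> simp

lemma aDivB_emb {m n : ℕ} (d : Ind m n) : aDivB (emb d) = aDiv d := by
  rcases d with i | j <;> simp [aDivB, emb, aDiv]

lemma aDivB_z0 {m n : ℕ} : aDivB (z0 : Ind (m+1) n) = 1 := by
  simp [aDivB, z0]

lemma aParB_z0 {m n : ℕ} (a : ℂ) (x : FaMon m n) :
    aParB a z0 (amono x) = (a - degM x) • amono x := by
  simp only [aParB, z0, Sum.elim_inl, Fin.cases_zero, aPar0, mkOp_amono, degM]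
  push_cast
  rw [sub_sub]

lemma aParB_aDiv {m n : ℕ} (a : ℂ) (d : Ind m n) (x : FaMon m n) :
    aParB a (emb d) (aDiv d (amono x)) = qM d x • amono x := by
  rw [aDiv_amono, map_smul]
  rcases d with i | j
  · simp [aParB, emb, aParE, mkOp_amono, cfM, incM, qM]
  · simp only [aParB, emb, aParO, Sum.map_inr, Sum.elim_inr, mkOp_amono, cfM, incM, qM, id,
      cntB_update]
    by_cases h : x.2 j = true
    · simp [h]
    · simp at h
      have h2 : ((-1 : ℂ) ^ cntB x.2 j * (-1) ^ cntB x.2 j) = 1 := by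
        rw [← mul_pow]; simp
      have : Function.update x.2 j false = x.2 := by rw [← h]; simp
      simp [this, h, smul_smul, h2]

lemma aParB_hw {m n : ℕ} (a : ℂ) (d : Ind m n) :
    aParB a (emb d) (amono (hwMon m n)) = 0 := by
  rcases d with i | j
  · simp [aParB, emb, aParE, mkOp_amono, hwMon]
  · simp [aParB, emb, aParO, mkOp_amono, hwMon]

/-- coordinates on `F_a ⊗ L` -/
def coordM {m n : ℕ} {L : Type} [AddCommGroup L] [Module ℂ L] (x : FaMon m n) :
    (FaSp m n ⊗[ℂ] L) →ₗ[ℂ] L :=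
  TensorProduct.lift ((LinearMap.lsmul ℂ L).comp (Finsupp.lapply x))

lemma coordM_tmul {m n : ℕ} {L : Type} [AddCommGroup L] [Module ℂ L] (x : FaMon m n)
    (f : FaSp m n) (w : L) : coordM x (f ⊗ₜ[ℂ] w) = f x • w := by
  simp [coordM]

lemma tens_ext {m n : ℕ} {L M : Type} [AddCommGroup L] [Module ℂ L] [AddCommGroup M] [Module ℂ M]
    (f g : (FaSp m n ⊗[ℂ] L) →ₗ[ℂ] M)
    (h : ∀ x w, f (amono x ⊗ₜ[ℂ] w) = g (amono x ⊗ₜ[ℂ] w)) : f = g := by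
  apply TensorProduct.ext'
  intro y w
  induction y using Finsupp.induction_linear with
  | zero => simp
  | add p q hp hq => rw [TensorProduct.add_tmul, map_add, map_add, hp, hq]
  | single x c =>
    have : (Finsupp.single x c : FaSp m n) = c • amono x := by simp [amono]
    rw [this, ← TensorProduct.smul_tmul', map_smul, map_smul, h]

lemma coord_zero {m n : ℕ} {L : Type} [AddCommGroup L] [Module ℂ L] (y : FaSp m n ⊗[ℂ] L)
    (S : Finset (FaMon m n)) (h : ∀ x, x ∉ S → coordM x y = 0) :
    y = ∑ x ∈ S, amono x ⊗ₜ[ℂ] coordM x y := by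
  classical
  have hfin : ∃ T : Finset (FaMon m n), ∀ T', T ⊆ T' → y = ∑ x ∈ T', amono x ⊗ₜ[ℂ] coordM x y := by
    clear h
    induction y using TensorProduct.induction_on with
    | zero => exact ⟨∅, fun T' _ => by simp⟩
    | add p q hp hq =>
      obtain ⟨T1, h1⟩ := hp
      obtain ⟨T2, h2⟩ := hq
      refine ⟨T1 ∪ T2, fun T' hT => ?_⟩
      simp only [map_add, TensorProduct.tmul_add, Finset.sum_add_distrib]
      rw [← h1 T' (Finset.union_subset_left hT), ← h2 T' (Finset.union_subset_right hT)]
    | tmul f w =>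
      refine ⟨f.support, fun T' hT => ?_⟩
      simp only [coordM_tmul, ← TensorProduct.smul_tmul]
      rw [← TensorProduct.sum_tmul]
      congr 1
      have h1 : f = ∑ x ∈ T', Finsupp.single x (f x) := by
        rw [← Finset.sum_subset hT (fun x _ hx => by simp [Finsupp.notMem_support_iff.1 hx])]
        exact f.sum_single.symm
      simpa [amono] using h1
  obtain ⟨T, hT⟩ := hfin
  have h1 := hT (T ∪ S) Finset.subset_union_left
  rw [← Finset.sum_subset (Finset.subset_union_right : S ⊆ T ∪ S)
    (fun x _ hx => by rw [h x hx, TensorProduct.tmul_zero])] at h1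
  exact h1

lemma coord_bound {m n : ℕ} {L : Type} [AddCommGroup L] [Module ℂ L] (y : FaSp m n ⊗[ℂ] L) :
    ∃ D : ℕ, ∀ x, D < degM x → coordM x y = 0 := by
  induction y using TensorProduct.induction_on with
  | zero => exact ⟨0, fun x _ => by simp⟩
  | add p q hp hq =>
    obtain ⟨T1, h1⟩ := hp
    obtain ⟨T2, h2⟩ := hq
    refine ⟨max T1 T2, fun x hx => ?_⟩
    rw [map_add, h1 x (lt_of_le_of_lt (le_max_left _ _) hx),
      h2 x (lt_of_le_of_lt (le_max_right _ _) hx), add_zero]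
  | tmul f w =>
    refine ⟨f.support.sup degM, fun x hx => ?_⟩
    have : x ∉ f.support := fun hc => absurd (Finset.le_sup (f := degM) hc) (not_le.2 hx)
    rw [coordM_tmul, Finsupp.notMem_support_iff.1 this, zero_smul]

lemma amono_apply {m n : ℕ} (z y : FaMon m n) [Decidable (z = y)] :
    (amono z) y = if z = y then 1 else 0 := by
  classical
  rw [amono, Finsupp.single_apply]

lemma coord_par {m n : ℕ} (a : ℂ) (d : Ind m n) (x z : FaMon m n) :
    (aParB a (emb d) (amono z)) x = (cfM d x * qM d x) * (amono z) (incM d x) := by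
  classical
  rcases d with i | j
  · simp only [aParB, emb, Sum.map_inl, Sum.elim_inl, Fin.cases_succ, aParE, mkOp_amono, cfM, qM,
      incM, Finsupp.smul_apply, smul_eq_mul, one_mul, amono_apply]
    by_cases hz : z.1 i = 0
    · have : z ≠ (Function.update x.1 i (x.1 i + 1), x.2) := by
        intro h; rw [h] at hz; simp at hz
      simp [hz, this]
    · by_cases h : z = (Function.update x.1 i (x.1 i + 1), x.2)
      · subst h; simp
      · have : (Function.update z.1 i (z.1 i - 1), z.2) ≠ x := by
          intro hx; apply h; rw [← hx]
          have : z.1 i - 1 + 1 = z.1 i := by omega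
          simp [this]
        simp [h, this]
  · simp only [aParB, emb, Sum.map_inr, Sum.elim_inr, id, aParO, mkOp_amono, cfM, qM,
      incM]
    by_cases hx : x.2 j = true
    · simp only [hx, if_true, zero_mul]
      split_ifs with hz
      · have : (z.1, Function.update z.2 j false) ≠ x := by
          intro h; rw [← h] at hx; simp at hx
        simp [amono_apply, this]
      · rfl
    · simp at hx
      by_cases h : z = (x.1, Function.update x.2 j true)
      · subst h
        have : Function.update x.2 j false = x.2 := by rw [← hx]; simp
        simp [amono, hx, this, cntB_update]
      · by_cases hz : z.2 j = true
        · have : (z.1, Function.update z.2 j false) ≠ x := by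
            intro h'; apply h; rw [← h', ← hz]; simp
          simp [amono_apply, this, h, hx, hz]
        · simp [amono_apply, h, hx, hz]

lemma exists_bot {m n : ℕ} {L : Type} [AddCommGroup L] [Module ℂ L] (a : ℂ)
    (N : Submodule ℂ (FaSp m n ⊗[ℂ] L)) (P : Ind m n → Module.End ℂ (FaSp m n ⊗[ℂ] L))
    (hP : ∀ d x w, P d (amono x ⊗ₜ[ℂ] w) = (aParB a (emb d) (amono x)) ⊗ₜ[ℂ] w)
    (hN : ∀ d, ∀ y ∈ N, P d y ∈ N) (D : ℕ) : ∀ y ∈ N, y ≠ 0 → (∀ x, D < degM x → coordM x y = 0) →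
      ∃ w : L, w ≠ 0 ∧ amono (hwMon m n) ⊗ₜ[ℂ] w ∈ N := by
  have hc : ∀ d x y, coordM x (P d y) = (cfM d x * qM d x) • coordM (incM d x) y := by
    intro d x y
    have := tens_ext ((coordM x).comp (P d)) ((cfM d x * qM d x) • coordM (L := L) (incM d x)) (by
      intro z w
      simp only [LinearMap.comp_apply, hP, LinearMap.smul_apply, coordM_tmul, coord_par, mul_smul])
    exact LinearMap.congr_fun this y
  have base : ∀ y ∈ N, y ≠ 0 → (∀ x, 0 < degM x → coordM x y = 0) →
      ∃ w : L, w ≠ 0 ∧ amono (hwMon m n) ⊗ₜ[ℂ] w ∈ N := by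
    intro y hy hy0 h
    have hh := coord_zero y {hwMon m n} (fun x hx => h x (by
      by_contra hc
      exact hx (by rw [degM_eq_zero x (by omega)]; simp)))
    rw [Finset.sum_singleton] at hh
    refine ⟨coordM (hwMon m n) y, ?_, hh ▸ hy⟩
    intro h0
    rw [h0, TensorProduct.tmul_zero] at hh
    exact hy0 hh
  induction D with
  | zero => exact base
  | succ D ih =>
    intro y hy hy0 h
    by_cases hall : ∀ d, P d y = 0
    · apply base y hy hy0
      intro x hx
      obtain ⟨d, z, rfl, h1, h2⟩ := exists_inc x (by omega)
      have := hc d z y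
      rw [hall d, map_zero] at this
      exact (smul_eq_zero.1 this.symm).resolve_left (mul_ne_zero h1 h2)
    · push Not at hall
      obtain ⟨d, hd⟩ := hall
      refine ih _ (hN d y hy) hd ?_
      intro x hx
      rw [hc]
      by_cases h0 : cfM d x = 0
      · simp [h0]
      · rw [h _ (by rw [degM_inc d x h0]; omega), smul_zero]


/-! ### The triangularity argument -/

/-- the diagonal coefficient -/
def kapM {m n : ℕ} (a : ℂ) (lam : Ind m n → ℂ) (c : Ind m n) (x : FaMon m n) : ℂ :=
  (a - degM x) - (-1 : ℂ) ^ (pI c) * lam c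
    + ∑ j, if rkI j < rkI c then (-1 : ℂ) ^ (pI j) * qM j x else 0

lemma q_of_cf {m n : ℕ} (d : Ind m n) (x : FaMon m n) (h : cfM d x = 0) : qM d x = 0 := by
  rcases d with i | j
  · simp [cfM] at h
  · by_cases hx : x.2 j = true
    · simp [qM, hx]
    · simp [cfM, hx] at h

lemma sgn_aux {m n : ℕ} (c j : Ind m n) (P : ℕ) :
    (((-1 : ℂ) ^ (pI c * pI j)) * ((-1 : ℂ) ^ ((pI c + pI j) * P)))
      * (-1 : ℂ) ^ ((pI c + pI j) * (P + pI j)) = (-1 : ℂ) ^ (pI j) := by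
  have h2 : ((-1 : ℂ) ^ P) * (-1 : ℂ) ^ P = 1 := by rw [← mul_pow]; simp
  rcases c with c | c <;> rcases j with j | j <;> simp [pI, pow_add, pow_mul, h2]

lemma sgn_sq (k : ℕ) : ((-1 : ℂ) ^ k) * (-1 : ℂ) ^ k = 1 := by
  rw [← mul_pow]; simp

lemma kap_step {m n : ℕ} {a r : ℂ} {lam : Ind m n → ℂ} (HW : SimpleHW m n lam)
    (Θ : UEA (Ind (m+1) n) pI →ₐ[ℂ] Module.End ℂ (FaSp m n ⊗[ℂ] HW.L))
    (hΘ : IsTensorRep a r HW.ρ Θ) (N : Submodule ℂ (FaSp m n ⊗[ℂ] HW.L))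
    (hN : ∀ (u : UEA (Ind (m+1) n) pI), ∀ x ∈ N, Θ u x ∈ N)
    (x : FaMon m n) (hx : amono x ⊗ₜ[ℂ] HW.v ∈ N) (c : Ind m n)
    (hc : ∀ j, rkI j < rkI c → aDiv j (amono x) ⊗ₜ[ℂ] HW.v ∈ N) :
    kapM a lam c x • (aDiv c (amono x) ⊗ₜ[ℂ] HW.v) ∈ N := by
  set Y := aDiv c (amono x) ⊗ₜ[ℂ] HW.v with hY
  have h0 := hN (gen pI (emb c) z0) _ hx
  rw [hΘ.2.1] at h0
  have e0 : (aTD a (emb c) z0) (amono x) ⊗ₜ[ℂ] HW.v = (a - degM x) • Y := by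
    rw [aTD, Module.End.mul_apply, aParB_z0, map_smul, aDivB_emb, ← TensorProduct.smul_tmul']
  rw [e0] at h0
  let cf : Ind m n → ℂ := fun j => (if rkI j < rkI c then (-1 : ℂ) ^ (pI j) * qM j x else 0)
    - (if j = c then (-1 : ℂ) ^ (pI c) * lam c else 0)
  have hterm : ∀ j : Ind m n,
      (((-1 : ℂ) ^ (pI c * pI j)) * ((-1 : ℂ) ^ ((pI c + pI j) * parM x))) •
          ((aDiv j (amono x)) ⊗ₜ[ℂ] (HW.ρ (gen pI c j) HW.v)) + cf j • Y ∈ N := by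
    intro j
    rcases lt_trichotomy (rkI c) (rkI j) with h | h | h
    · have h1 : ¬ rkI j < rkI c := by omega
      have h2 : j ≠ c := by rintro rfl; omega
      rw [HW.hw c j ((iltI_iff c j).2 h)]
      simp [cf, h1, h2]
    · have h' := rkI_inj h
      subst h'
      rw [HW.hwt, TensorProduct.tmul_smul, ← hY]
      have hs : ((-1 : ℂ) ^ (pI c * pI c)) * ((-1 : ℂ) ^ ((pI c + pI c) * parM x))
          = (-1 : ℂ) ^ (pI c) := by
        rw [← two_mul, mul_assoc, pow_mul (-1 : ℂ) 2]
        rcases c with c | c <;> simp [pI]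
      rw [hs]
      have : cf c = -((-1 : ℂ) ^ pI c * lam c) := by simp [cf]
      rw [this, smul_smul, ← add_smul, add_neg_cancel, zero_smul]
      exact N.zero_mem
    · have h2 : j ≠ c := by rintro rfl; omega
      have hj := hN (gen pI (emb c) (emb j)) _ (hc j h)
      have e1 : Θ (gen pI (emb c) (emb j)) (aDiv j (amono x) ⊗ₜ[ℂ] HW.v)
          = qM j x • Y + ((-1 : ℂ) ^ ((pI c + pI j) * (parM x + pI j))) •
            ((aDiv j (amono x)) ⊗ₜ[ℂ] (HW.ρ (gen pI c j) HW.v)) := by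
        by_cases hcf : cfM j x = 0
        · rw [aDiv_amono j, hcf, q_of_cf j x hcf]; simp
        · have e2 : aTD a (emb c) (emb j) (aDiv j (amono x)) = qM j x • aDiv c (amono x) := by
            rw [aTD, Module.End.mul_apply, aParB_aDiv, map_smul, aDivB_emb]
          rw [hY, TensorProduct.smul_tmul', ← e2, aDiv_amono j]
          simp only [map_smul, ← TensorProduct.smul_tmul']
          rw [hΘ.1, parM_inc j x hcf, if_neg (Ne.symm h2), add_zero, smul_add, smul_comm (cfM j x)]
      rw [e1] at hj
      have hj2 := N.smul_mem ((((-1 : ℂ) ^ (pI c * pI j)) * ((-1 : ℂ) ^ ((pI c + pI j) * parM x)))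
        * (-1 : ℂ) ^ ((pI c + pI j) * (parM x + pI j))) hj
      rw [smul_add, smul_smul, smul_smul, mul_assoc _ ((-1 : ℂ) ^ ((pI c + pI j) * (parM x + pI j))) ((-1 : ℂ) ^ _),
        sgn_sq, mul_one, sgn_aux, add_comm] at hj2
      simpa [cf, h, h2] using hj2
  have hsum := N.add_mem h0 (N.sum_mem fun j (_ : j ∈ Finset.univ) => hterm j)
  rw [Finset.sum_add_distrib, ← add_assoc, sub_add_cancel, ← Finset.sum_smul, ← add_smul] at hsum
  convert hsum using 2
  simp only [cf, kapM, Finset.sum_sub_distrib, Finset.sum_ite_eq', Finset.mem_univ, if_true]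
  ring

lemma kap_even {m n : ℕ} (a : ℂ) (lam : Ind m n → ℂ) (i : Fin m) (x : FaMon m n) :
    ∃ M : ℕ, kapM a lam (Sum.inl i) x = a - lam (Sum.inl i) + (i : ℕ) - M := by
  refine ⟨(∑ j, if j < i then 0 else x.1 j) + cntA x.2, ?_⟩
  have h1 : ∀ j : Fin n, ¬ (m + (j : ℕ) < i) := fun j => by omega
  have h2 : (∑ j : Fin m, if j < i then (1 : ℂ) else 0) = (i : ℕ) := by
    rw [Finset.sum_boole]
    rw [show (Finset.univ.filter fun j => j < i) = Finset.Iio i by ext; simp, Fin.card_Iio]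
  have h3 : (∑ j : Fin m, if j < i then ((x.1 j : ℂ) + 1) else 0)
      = (∑ j : Fin m, (x.1 j : ℂ)) - (∑ j : Fin m, if j < i then (0 : ℂ) else (x.1 j : ℂ))
        + (i : ℕ) := by
    rw [← h2, ← Finset.sum_sub_distrib, ← Finset.sum_add_distrib]
    refine Finset.sum_congr rfl fun j _ => ?_
    split_ifs <;> ring
  simp only [kapM, Fintype.sum_sum_type, rkI, Sum.elim_inl, Sum.elim_inr, h1, if_false,
    Finset.sum_const_zero, pI, pow_zero, one_mul, qM, Fin.val_fin_lt, h3, degM]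
  push_cast
  ring

lemma kap_odd {m n : ℕ} (a : ℂ) (lam : Ind m n → ℂ) (t : Fin n) (x : FaMon m n) :
    ∃ M : ℕ, kapM a lam (Sum.inr t) x = a + lam (Sum.inr t) + m - (t : ℕ) - M := by
  refine ⟨∑ j, if j < t then 0 else if x.2 j then 1 else 0, ?_⟩
  have h1 : ∀ j : Fin m, ((j : ℕ) < m + t) := fun j => by omega
  have h2 : (∑ j : Fin n, if j < t then (1 : ℂ) else 0) = (t : ℕ) := by
    rw [Finset.sum_boole]
    rw [show (Finset.univ.filter fun j => j < t) = Finset.Iio t by ext; simp, Fin.card_Iio]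
  have h4 : (cntA x.2 : ℂ) = ∑ j, if x.2 j then (1 : ℂ) else 0 := by
    rw [Finset.sum_boole]; rfl
  have h3 : (∑ j : Fin n, if j < t then (-1 : ℂ) * (if x.2 j then (0 : ℂ) else 1) else 0)
      = (cntA x.2 : ℂ) - (∑ j : Fin n, if j < t then (0 : ℂ) else if x.2 j then 1 else 0)
        - (t : ℕ) := by
    rw [← h2, h4, ← Finset.sum_sub_distrib, ← Finset.sum_sub_distrib]
    refine Finset.sum_congr rfl fun j _ => ?_
    split_ifs <;> ring
  simp only [kapM, Fintype.sum_sum_type, rkI, Sum.elim_inl, Sum.elim_inr, h1, if_true,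
    pI, pow_zero, pow_one, one_mul, qM, Nat.add_lt_add_iff_left, Fin.val_fin_lt, h3, degM,
    Finset.sum_add_distrib]
  push_cast
  simp
  ring

lemma all_mem {m n : ℕ} {a r : ℂ} {lam : Ind m n → ℂ} (HW : SimpleHW m n lam)
    (Θ : UEA (Ind (m+1) n) pI →ₐ[ℂ] Module.End ℂ (FaSp m n ⊗[ℂ] HW.L))
    (hΘ : IsTensorRep a r HW.ρ Θ) (N : Submodule ℂ (FaSp m n ⊗[ℂ] HW.L))
    (hN : ∀ (u : UEA (Ind (m+1) n) pI), ∀ x ∈ N, Θ u x ∈ N)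
    (hk : ∀ c x, kapM a lam c x ≠ 0)
    (h0 : amono (hwMon m n) ⊗ₜ[ℂ] HW.v ∈ N) : ∀ D : ℕ, ∀ x : FaMon m n, degM x = D →
      amono x ⊗ₜ[ℂ] HW.v ∈ N := by
  intro D
  induction D with
  | zero => intro x hx; rw [degM_eq_zero x hx]; exact h0
  | succ D ih =>
    intro x hx
    obtain ⟨d, y, rfl, h1, h2⟩ := exists_inc x (by omega)
    rw [degM_inc d y h1] at hx
    have hy := ih y (by omega)
    have : ∀ k : ℕ, ∀ c : Ind m n, rkI c = k → aDiv c (amono y) ⊗ₜ[ℂ] HW.v ∈ N := by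
      intro k
      induction k using Nat.strong_induction_on with
      | _ k ihk =>
        intro c hck
        have := kap_step HW Θ hΘ N hN y hy c (fun j hj => ihk (rkI j) (by omega) j rfl)
        exact (N.smul_mem_iff (hk c y)).1 this
    have hd := this _ d rfl
    rw [aDiv_amono, ← TensorProduct.smul_tmul'] at hd
    exact (N.smul_mem_iff h1).1 hd

lemma mem_left {M : Type} [AddCommMonoid M] [Module ℂ M] (N : Submodule ℂ M) {x y : M}
    (hy : y ∈ N) (h : x + y ∈ N) : x ∈ N := by
  have h1 := N.add_mem h (N.smul_mem (-1 : ℂ) hy)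
  have h2 : x + y + (-1 : ℂ) • y = x := by
    have : y + (-1 : ℂ) • y = 0 := by
      nth_rewrite 1 [← one_smul ℂ y]
      rw [← add_smul, add_neg_cancel, zero_smul]
    rw [add_assoc, this, add_zero]
  rwa [h2] at h1

lemma mem_right {M : Type} [AddCommMonoid M] [Module ℂ M] (N : Submodule ℂ M) {x y : M}
    (hx : x ∈ N) (h : x + y ∈ N) : y ∈ N := mem_left N hx (by rwa [add_comm])

lemma tens_simple {m n : ℕ} {a r : ℂ} {lam : Ind m n → ℂ} (HW : SimpleHW m n lam)
    (Θ : UEA (Ind (m+1) n) pI →ₐ[ℂ] Module.End ℂ (FaSp m n ⊗[ℂ] HW.L))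
    (hΘ : IsTensorRep a r HW.ρ Θ)
    (hk : ∀ c x, kapM a lam c x ≠ 0) (N : Submodule ℂ (FaSp m n ⊗[ℂ] HW.L))
    (hN : ∀ (u : UEA (Ind (m+1) n) pI), ∀ x ∈ N, Θ u x ∈ N) : N = ⊥ ∨ N = ⊤ := by
  by_cases hb : N = ⊥
  · exact Or.inl hb
  right
  obtain ⟨y, hy, hy0⟩ := N.exists_mem_ne_zero_of_ne_bot hb
  obtain ⟨D, hD⟩ := coord_bound y
  obtain ⟨w, hw0, hw⟩ := exists_bot a N (fun d => Θ (gen pI z0 (emb d)))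
    (fun d x w => by
      rw [hΘ.2.2.1, aTD, aDivB_z0, one_mul])
    (fun d => hN _) D y hy hy0 hD
  -- the degree zero part
  have hL0 : ∀ w : HW.L, amono (hwMon m n) ⊗ₜ[ℂ] w ∈ N := by
    let K : Submodule ℂ HW.L := N.comap (TensorProduct.mk ℂ (FaSp m n) HW.L (amono (hwMon m n)))
    have hK : ∀ w, w ∈ K ↔ amono (hwMon m n) ⊗ₜ[ℂ] w ∈ N := fun w => Iff.rfl
    rcases HW.simple K (aux_stable HW.ρ K (by
      intro i j x hx
      rw [hK] at *
      have h1 := hN (gen pI (emb i) (emb j)) _ hx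
      rw [hΘ.1, aTD, Module.End.mul_apply, aParB_hw, map_zero, TensorProduct.zero_tmul, zero_add]
        at h1
      have h2 : (if i = j then (((-1 : ℂ) ^ (pI i * pI j)) * r) •
          (amono (hwMon m n) ⊗ₜ[ℂ] x) else 0) ∈ N := by
        split_ifs
        · exact N.smul_mem _ hx
        · exact N.zero_mem
      have h3 := mem_left N h2 h1
      exact (N.smul_mem_iff (pow_ne_zero _ (by norm_num))).1 h3)) with h | h
    · exfalso
      have : w ∈ K := hw
      rw [h] at this; exact hw0 (by simpa using this)
    · intro w
      have : w ∈ K := by rw [h]; trivial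
      exact this
  have hv : ∀ x, amono x ⊗ₜ[ℂ] HW.v ∈ N := fun x =>
    all_mem HW Θ hΘ N hN hk (hL0 _) _ x rfl
  have hall : ∀ w : HW.L, ∀ f : FaSp m n, f ⊗ₜ[ℂ] w ∈ N := by
    let K : Submodule ℂ HW.L := ⨅ f : FaSp m n, N.comap (TensorProduct.mk ℂ (FaSp m n) HW.L f)
    have hK : ∀ w, w ∈ K ↔ ∀ f : FaSp m n, f ⊗ₜ[ℂ] w ∈ N := by
      intro w; simp [K, Submodule.mem_iInf]
    have hmon : ∀ w : HW.L, (∀ x, amono x ⊗ₜ[ℂ] w ∈ N) → w ∈ K := by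
      intro w hw
      rw [hK]
      intro f
      induction f using Finsupp.induction_linear with
      | zero => rw [TensorProduct.zero_tmul]; exact N.zero_mem
      | add p q hp hq => rw [TensorProduct.add_tmul]; exact N.add_mem hp hq
      | single x c =>
        have : (Finsupp.single x c : FaSp m n) = c • amono x := by simp [amono]
        rw [this, ← TensorProduct.smul_tmul']
        exact N.smul_mem _ (hw x)
    rcases HW.simple K (aux_stable HW.ρ K (by
      intro i j w hw
      apply hmon
      intro x
      have hx := (hK w).1 hw
      have h1 := hN (gen pI (emb i) (emb j)) _ (hx (amono x))
      rw [hΘ.1] at h1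
      have h2 : (if i = j then (((-1 : ℂ) ^ (pI i * pI j)) * r) •
          (amono x ⊗ₜ[ℂ] w) else 0) ∈ N := by
        split_ifs
        · exact N.smul_mem _ (hx _)
        · exact N.zero_mem
      have h3 := mem_left N h2 h1
      have h4 := mem_right N (hx _) h3
      exact (N.smul_mem_iff (pow_ne_zero _ (by norm_num))).1 h4)) with h | h
    · exfalso
      have : HW.v ∈ K := hmon _ hv
      rw [h] at this; exact HW.v_ne (by simpa using this)
    · intro w
      have : w ∈ K := by rw [h]; trivial
      exact (hK w).1 this
  rw [eq_top_iff]
  rintro z -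
  induction z using TensorProduct.induction_on with
  | zero => exact N.zero_mem
  | add p q hp hq => exact N.add_mem hp hq
  | tmul f w => exact hall w f

lemma ind_cases {m n : ℕ} (i : Ind (m+1) n) : i = z0 ∨ ∃ c, i = emb c := by
  rcases i with i | j
  · refine Fin.cases (Or.inl rfl) (fun i => Or.inr ⟨Sum.inl i, rfl⟩) i
  · exact Or.inr ⟨Sum.inr j, rfl⟩

/-- `F_a ⊗ L(λ)` as a simple highest weight module. -/
def tensHW {m n : ℕ} {a r : ℂ} {lam : Ind m n → ℂ} (HW : SimpleHW m n lam)
    (Θ : UEA (Ind (m+1) n) pI →ₐ[ℂ] Module.End ℂ (FaSp m n ⊗[ℂ] HW.L))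
    (hΘ : IsTensorRep a r HW.ρ Θ)
    (hk : ∀ c x, kapM a lam c x ≠ 0) : SimpleHW (m+1) n (lamTilde a r lam) where
  L := FaSp m n ⊗[ℂ] HW.L
  ρ := Θ
  v := amono (hwMon m n) ⊗ₜ[ℂ] HW.v
  v_ne := by
    intro h
    have := congrArg (coordM (hwMon m n)) h
    rw [coordM_tmul, map_zero] at this
    simp [amono] at this
    exact HW.v_ne this
  hw := by
    intro i j hij
    rcases ind_cases i with rfl | ⟨c, rfl⟩ <;> rcases ind_cases j with rfl | ⟨d, rfl⟩
    · simp [iltI, z0] at hij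
    · rw [hΘ.2.2.1, aTD, Module.End.mul_apply, aParB_hw, map_zero, TensorProduct.zero_tmul]
    · exfalso
      rcases c with c | c <;> simp [iltI, z0, emb] at hij
    · have hcd : iltI c d := by
        rcases c with c | c <;> rcases d with d | d <;> simpa [iltI, emb] using hij
      have hne : c ≠ d := by
        rintro rfl
        have := (iltI_iff c c).1 hcd
        omega
      rw [hΘ.1, aTD, Module.End.mul_apply, aParB_hw, map_zero, TensorProduct.zero_tmul,
        HW.hw c d hcd, if_neg hne]
      simp
  hwt := by
    intro i
    rcases ind_cases i with rfl | ⟨c, rfl⟩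
    · rw [hΘ.2.2.2, aTD, Module.End.mul_apply, aParB_z0, aDivB_z0]
      have : degM (hwMon m n) = 0 := by simp [degM, hwMon, cntA]
      rw [this]
      simp [lamTilde, z0, add_smul, ← TensorProduct.smul_tmul']
    · rw [hΘ.1, aTD, Module.End.mul_apply, aParB_hw, map_zero, TensorProduct.zero_tmul,
        HW.hwt, if_pos rfl, TensorProduct.tmul_smul, zero_add, smul_smul, ← add_smul]
      congr 1
      have : parM (hwMon m n) = 0 := by simp [parM, hwMon, cntA]
      rw [this]
      rcases c with c | c <;> simp [lamTilde, emb, pI] <;> ring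
  simple := fun N hN => tens_simple HW Θ hΘ hk N (fun u x hx => hN u x hx)

/-- Corollary 4.4.  If `(λ̃+ρ_{m+1|n}, δ_0−δ_i) ∉ ℤ_{>0}` for `1 ≤ i ≤ m` and
`(λ̃+ρ_{m+1|n}, δ_0−δ_i) ∉ ℤ_{≥0}` for `1̄ ≤ i ≤ n̄`, then `F_a ⊗ L(λ)` is simple, hence
isomorphic to `L(λ̃)`.  Here `(λ̃+ρ, δ_0−δ_i) = (λ̃+ρ)_0 − (−1)^{|i|}(λ̃+ρ)_i`, where
`ρ = ρ_{m+1|n}` is realized by `rhoS (m := m+1)`. -/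
theorem stmt8 (m n : ℕ) (a r : ℂ) (lam : Ind m n → ℂ) (HW : SimpleHW m n lam)
    (HW' : SimpleHW (m+1) n (lamTilde a r lam))
    (Θ : UEA (Ind (m+1) n) pI →ₐ[ℂ] Module.End ℂ (FaSp m n ⊗[ℂ] HW.L))
    (hΘ : IsTensorRep a r HW.ρ Θ)
    (hcondE : ∀ i : Fin m, ¬∃ N : ℕ,
      (lamTilde a r lam z0 + rhoS (m := m+1) (n := n) z0)
        - (lamTilde a r lam (emb (Sum.inl i)) + rhoS (m := m+1) (n := n) (emb (Sum.inl i)))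
        = (N : ℂ) + 1)
    (hcondO : ∀ j : Fin n, ¬∃ N : ℕ,
      (lamTilde a r lam z0 + rhoS (m := m+1) (n := n) z0)
        + (lamTilde a r lam (emb (Sum.inr j)) + rhoS (m := m+1) (n := n) (emb (Sum.inr j)))
        = (N : ℂ)) :
    (∀ N : Submodule ℂ (FaSp m n ⊗[ℂ] HW.L),
      (∀ (u : UEA (Ind (m+1) n) pI), ∀ x ∈ N, Θ u x ∈ N) → N = ⊥ ∨ N = ⊤) ∧
    (∃ g : (FaSp m n ⊗[ℂ] HW.L) ≃ₗ[ℂ] HW'.L,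
      ∀ (u : UEA (Ind (m+1) n) pI) (x : FaSp m n ⊗[ℂ] HW.L),
        g (Θ u x) = HW'.ρ u (g x)) := by
  have hk : ∀ c x, kapM a lam c x ≠ 0 := by
    intro c x h
    rcases c with i | t
    · obtain ⟨M, hM⟩ := kap_even a lam i x
      apply hcondE i
      refine ⟨M, ?_⟩
      rw [hM] at h
      simp [lamTilde, rhoS, z0, emb]
      linear_combination h
    · obtain ⟨M, hM⟩ := kap_odd a lam t x
      apply hcondO t
      refine ⟨M, ?_⟩
      rw [hM] at h
      simp [lamTilde, rhoS, z0, emb]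
      linear_combination h
  exact ⟨fun N hN => tens_simple HW Θ hΘ hk N hN, uniqHW (tensHW HW Θ hΘ hk) HW'⟩
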